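/- Let 0 ≤ β < 1 and let N be a positive integer with binary expansion N = 2^{ν_0} + 2^{ν_1} + … + 2^{ν_σ}, where ν_0 > ν_1 > … > ν_σ ≥ 0. Then F_β(N) = Σ_{g=0}^{σ} exp(2πi(β·Σ_{j=0}^{g−1} 2^{ν_j} + g/2)) · Π_{k=0}^{ν_g−1} (1 + exp(2πi(β·2^k + 1/2))). (Lemma 1.) -/

import Mathlib

/-!
The idea is additivity of the binary digit sum without carries: if `2 ^ k ∣ M` and `m < 2 ^ k`, then
`s (M + m) = s M + s m` (`s_add_of_dvd`). Hence the sum over the block `[M, M + 2 ^ k)` is the phase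
of `M` times `F β (2 ^ k)` (`F_add_two_pow`). With `M = 2 ^ k` this gives the doubling relation
behind the product formula for `F β (2 ^ k)` (`F_two_pow`). The theorem follows by cutting `[0, N)`
into the consecutive blocks of length `2 ^ ν_g` that start at the partial sums
`2 ^ ν_0 + … + 2 ^ ν_{g-1}`; such a partial sum is divisible by `2 ^ ν_g` and has digit sum `g`.
-/

/-- `s n` is the number of 1's in the binary expansion of `n`. -/
def s (n : ℕ) : ℕ := (Nat.digits 2 n).sum

/-- `F β N = Σ_{n<N} exp(2πi(β n + s(n)/2))`. -/
noncomputable def F (β : ℝ) (N : ℕ) : ℂ :=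
  ∑ n ∈ Finset.range N,
    Complex.exp (2 * Real.pi * Complex.I * ((β : ℂ) * n + (s n : ℂ) / 2))

lemma s_two_mul_add (n r : ℕ) (hr : r < 2) : s (2 * n + r) = s n + r := by
  unfold s
  rcases Nat.eq_zero_or_pos (2 * n + r) with h | h
  · obtain ⟨rfl, rfl⟩ : n = 0 ∧ r = 0 := by omega
    simp
  · rw [Nat.digits_def' (by norm_num) h, List.sum_cons,
      show (2 * n + r) % 2 = r by omega, show (2 * n + r) / 2 = n by omega, add_comm]

lemma s_two_pow_mul_add (k a m : ℕ) (hm : m < 2 ^ k) : s (2 ^ k * a + m) = s a + s m := by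
  induction k generalizing m with
  | zero =>
    obtain rfl : m = 0 := by simpa using hm
    simp [s]
  | succ k ih =>
    have hm2 : m / 2 < 2 ^ k := by rw [pow_succ] at hm; omega
    have hr : m % 2 < 2 := Nat.mod_lt _ two_pos
    have e : 2 ^ (k + 1) * a + m = 2 * (2 ^ k * a + m / 2) + m % 2 := by
      conv_lhs => rw [← Nat.div_add_mod m 2]
      ring
    have hsm : s m = s (m / 2) + m % 2 := by
      conv_lhs => rw [← Nat.div_add_mod m 2]
      exact s_two_mul_add _ _ hr
    rw [e, s_two_mul_add _ _ hr, ih _ hm2, hsm, add_assoc]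

/-- Digit sums add when no binary digit positions overlap. -/
lemma s_add_of_dvd {k M m : ℕ} (hM : 2 ^ k ∣ M) (hm : m < 2 ^ k) : s (M + m) = s M + s m := by
  obtain ⟨a, rfl⟩ := hM
  have h0 := s_two_pow_mul_add k a 0 (by positivity)
  have hs : s 0 = 0 := by simp [s]
  rw [s_two_pow_mul_add k a m hm, ← add_zero (2 ^ k * a), h0, hs, add_zero]

lemma s_two_pow (k : ℕ) : s (2 ^ k) = 1 := by
  have h := s_two_pow_mul_add k 1 0 (by positivity)
  simpa [s] using h

/-- The block `[M, M + 2 ^ k)` with `2 ^ k ∣ M` contributes the phase of `M` times `F β (2 ^ k)`. -/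
lemma F_add_two_pow (β : ℝ) {k M : ℕ} (hM : 2 ^ k ∣ M) :
    F β (M + 2 ^ k) = F β M +
      Complex.exp (2 * Real.pi * Complex.I * ((β : ℂ) * M + (s M : ℂ) / 2)) * F β (2 ^ k) := by
  unfold F
  rw [Finset.sum_range_add, Finset.mul_sum]
  congr 1
  refine Finset.sum_congr rfl fun m hm => ?_
  rw [s_add_of_dvd hM (Finset.mem_range.mp hm), ← Complex.exp_add]
  push_cast
  ring_nf

lemma F_two_pow (β : ℝ) (n : ℕ) :
    F β (2 ^ n) = ∏ k ∈ Finset.range n,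
      (1 + Complex.exp (2 * Real.pi * Complex.I * ((β : ℂ) * 2 ^ k + 1 / 2))) := by
  induction n with
  | zero => simp [F, s]
  | succ n ih =>
    rw [Finset.prod_range_succ, ← ih, pow_succ, mul_two, F_add_two_pow β dvd_rfl, s_two_pow]
    push_cast
    ring

lemma two_pow_dvd_partial_sum {ν : ℕ → ℕ} {g k : ℕ} (h : ∀ j < g, k ≤ ν j) :
    2 ^ k ∣ ∑ j ∈ Finset.range g, 2 ^ ν j :=
  Finset.dvd_sum fun j hj => pow_dvd_pow 2 (h j (Finset.mem_range.mp hj))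

lemma s_partial_sum {σ : ℕ} {ν : ℕ → ℕ} (hν : ∀ i j : ℕ, i < j → j ≤ σ → ν j < ν i)
    (g : ℕ) (hg : g ≤ σ + 1) : s (∑ j ∈ Finset.range g, 2 ^ ν j) = g := by
  induction g with
  | zero => simp [s]
  | succ g ih =>
    -- Divisibility by the larger power `2 ^ (ν g + 1)` leaves digit position `ν g` free.
    have hd : 2 ^ (ν g + 1) ∣ ∑ j ∈ Finset.range g, 2 ^ ν j :=
      two_pow_dvd_partial_sum fun j hj => hν j g hj (by omega)
    rw [Finset.sum_range_succ, s_add_of_dvd hd (Nat.pow_lt_pow_right (by norm_num) (by omega)),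
      ih (by omega), s_two_pow]

/-- Lemma 1: if `N = 2^{ν_0} + … + 2^{ν_σ}` with `ν_0 > … > ν_σ ≥ 0`, then
`F_β(N) = Σ_{g≤σ} exp(2πi(β Σ_{j<g} 2^{ν_j} + g/2)) Π_{k<ν_g} (1 + exp(2πi(β 2^k + 1/2)))`. -/
theorem F_binary_expansion_formula
    (β : ℝ) (hβ0 : 0 ≤ β) (hβ1 : β < 1)
    (σ : ℕ) (ν : ℕ → ℕ)
    (hν : ∀ i j : ℕ, i < j → j ≤ σ → ν j < ν i)
    (N : ℕ) (hN : N = ∑ g ∈ Finset.range (σ + 1), 2 ^ (ν g)) :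
    F β N = ∑ g ∈ Finset.range (σ + 1),
      Complex.exp (2 * Real.pi * Complex.I *
          ((β : ℂ) * (∑ j ∈ Finset.range g, (2 : ℂ) ^ (ν j)) + (g : ℂ) / 2)) *
        ∏ k ∈ Finset.range (ν g),
          (1 + Complex.exp (2 * Real.pi * Complex.I * ((β : ℂ) * 2 ^ k + 1 / 2))) := by
  subst hN
  -- Induction on the number of leading blocks, keeping `σ` fixed in `hν`.
  suffices h : ∀ m ≤ σ + 1, F β (∑ g ∈ Finset.range m, 2 ^ ν g) = ∑ g ∈ Finset.range m,
      Complex.exp (2 * Real.pi * Complex.I *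
          ((β : ℂ) * (∑ j ∈ Finset.range g, (2 : ℂ) ^ (ν j)) + (g : ℂ) / 2)) *
        ∏ k ∈ Finset.range (ν g),
          (1 + Complex.exp (2 * Real.pi * Complex.I * ((β : ℂ) * 2 ^ k + 1 / 2))) from
    h (σ + 1) le_rfl
  intro m hm
  induction m with
  | zero => simp [F]
  | succ m ih =>
    have hd : 2 ^ ν m ∣ ∑ j ∈ Finset.range m, 2 ^ ν j :=
      two_pow_dvd_partial_sum fun j hj => (hν j m hj (by omega)).le
    rw [Finset.sum_range_succ, F_add_two_pow β hd, ih (by omega), s_partial_sum hν m (by omega),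
      F_two_pow, Finset.sum_range_succ _ m]
    push_cast
    rfl
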